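/- Let u be a Lyndon word and v, w nonempty words. If v ≫ u and w ≥ v in the lexicographic order, then w ≫ u. -/

import Mathlib

/-- A word `u` is a Lyndon word if it is nonempty and lexicographically smaller than
each of its proper nonempty suffixes. -/
def IsLyndon {X : Type*} [LinearOrder X] (u : List X) : Prop :=
  u ≠ [] ∧ ∀ v w : List X, v ≠ [] → w ≠ [] → u = v ++ w → List.Lex (· < ·) u w

/-- `ls` is a Lyndon factorization of `u`: all factors are Lyndon words, the factors are
(lexicographically) nonincreasing, and their concatenation is `u`. -/
def IsLyndonFactorization {X : Type*} [LinearOrder X] (ls : List (List X)) (u : List X) : Prop :=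
  (∀ l ∈ ls, IsLyndon l) ∧ ls.Chain' (fun a b => ¬ List.Lex (· < ·) a b) ∧ ls.flatten = u

/-- `v ≫ u` : the first Lyndon letter of the Lyndon decomposition of `v` is
lexicographically greater than `u`. -/
def MuchGt {X : Type*} [LinearOrder X] (v u : List X) : Prop :=
  ∃ (l : List X) (t : List (List X)),
    IsLyndonFactorization (l :: t) v ∧ List.Lex (· < ·) u l

/-!
The first Lyndon letter of a nonempty word `w` is the largest Lyndon word `l ≤ w`: it is a prefix
of `w`, and a product of words all smaller than a Lyndon word `l` is smaller than `l`. So `v ≫ u`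
says that some Lyndon word `l` satisfies `u < l ≤ v`, a condition that is monotone in `v`.
-/

theorem exists_eq_append_or_append_lt_append_of_lt {X : Type*} [LT X] {a b : List X} (hab : a < b) :
    (∃ c, c ≠ [] ∧ b = a ++ c) ∨ ∀ x y, a ++ x < b ++ y := by
  induction hab with
  | nil => exact .inl ⟨_, List.cons_ne_nil _ _, rfl⟩
  | rel h => exact .inr fun _ _ => .rel h
  | cons _ ih =>
    rcases ih with ⟨c, hc, rfl⟩ | h
    · exact .inl ⟨c, hc, rfl⟩
    · exact .inr fun x y => .cons (h x y)

section

variable {X : Type*} [LinearOrder X]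

theorem isLyndon_singleton (x : X) : IsLyndon [x] := by
  refine ⟨List.cons_ne_nil x [], fun v w hv hw h => ?_⟩
  rcases List.append_eq_singleton_iff.1 h.symm with ⟨rfl, _⟩ | ⟨_, rfl⟩
  · exact absurd rfl hv
  · exact absurd rfl hw

namespace IsLyndon

theorem le_of_suffix {l s : List X} (hl : IsLyndon l) (hs : s ≠ []) (hsl : s <:+ l) : l ≤ s := by
  obtain ⟨p, rfl⟩ := hsl
  rcases eq_or_ne p [] with rfl | hp
  · exact le_rfl
  · exact le_of_lt (hl.2 p s hp hs rfl)

theorem append_lt_right {a b : List X} (hb : IsLyndon b) (ha : a ≠ []) (hab : a < b) :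
    a ++ b < b := by
  rcases exists_eq_append_or_append_lt_append_of_lt hab with ⟨c, hc, rfl⟩ | h
  · exact List.append_left_lt (hb.2 a c ha hc rfl)
  · simpa only [List.append_nil] using h b []

theorem append {a b : List X} (ha : IsLyndon a) (hb : IsLyndon b) (hab : a < b) :
    IsLyndon (a ++ b) := by
  have hlt : a ++ b < b := hb.append_lt_right ha.1 hab
  refine ⟨List.append_ne_nil_of_left_ne_nil ha.1 b, fun v w hv hw h => ?_⟩
  rcases List.append_eq_append_iff.1 h with ⟨c, rfl, rfl⟩ | ⟨c, rfl, rfl⟩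
  · exact hlt.trans_le (hb.le_of_suffix hw (List.suffix_append c w))
  · rcases eq_or_ne c [] with rfl | hc
    · exact hlt
    · have hlt_suffix : v ++ c < c := ha.2 v c hv hc rfl
      rcases exists_eq_append_or_append_lt_append_of_lt hlt_suffix with ⟨d, _, hd⟩ | h
      · have hpre : v ++ c <+: c := ⟨d, hd.symm⟩
        have hlen : c.length ≤ (v ++ c).length := (List.suffix_append v c).length_le
        exact absurd (List.append_left_eq_self.1 (hpre.eq_of_length_le hlen)) hv
      · exact h b b

-- Suffixes of `l` appear because of the induction: if the first factor is a prefix of `s`, then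
-- what remains of `s` is again a suffix of `l`.
theorem flatten_lt_suffix {l s : List X} {ms : List (List X)} (hl : IsLyndon l)
    (hms : ∀ m ∈ ms, m < l) (hs : s ≠ []) (hsl : s <:+ l) : ms.flatten < s := by
  induction ms generalizing s with
  | nil => exact (List.lex_nil_or_eq_nil s).resolve_right hs
  | cons m ms ih =>
    obtain ⟨hm, hms⟩ := List.forall_mem_cons.1 hms
    have hmlt : m < s := hm.trans_le (hl.le_of_suffix hs hsl)
    rw [List.flatten_cons]
    rcases exists_eq_append_or_append_lt_append_of_lt hmlt with ⟨c, hc, rfl⟩ | h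
    · exact List.append_left_lt (ih hms hc ((List.suffix_append m c).trans hsl))
    · simpa only [List.append_nil] using h ms.flatten []

theorem exists_isLyndonFactorization_append {a w : List X} {ls : List (List X)} (ha : IsLyndon a)
    (hw : IsLyndonFactorization ls w) : ∃ ms, IsLyndonFactorization ms (a ++ w) := by
  induction ls generalizing a w with
  | nil =>
    obtain ⟨_, _, rfl⟩ := hw
    exact ⟨[a], List.forall_mem_singleton.2 ha, .singleton a, rfl⟩
  | cons l ls ih =>
    obtain ⟨hlyn, hchain, rfl⟩ := hw
    by_cases hal : a < l
    · obtain ⟨hl, hls⟩ := List.forall_mem_cons.1 hlyn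
      obtain ⟨ms, hms⟩ := ih (ha.append hl hal) ⟨hls, hchain.tail, rfl⟩
      exact ⟨ms, by simpa only [List.flatten_cons, List.append_assoc] using hms⟩
    · exact ⟨a :: l :: ls, List.forall_mem_cons.2 ⟨ha, hlyn⟩,
        List.isChain_cons_cons.2 ⟨hal, hchain⟩, rfl⟩

end IsLyndon

theorem exists_isLyndonFactorization (w : List X) : ∃ ls, IsLyndonFactorization ls w := by
  induction w with
  | nil => exact ⟨[], List.forall_mem_nil _, .nil, rfl⟩
  | cons x w ih =>
    obtain ⟨ls, hls⟩ := ih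
    exact (isLyndon_singleton x).exists_isLyndonFactorization_append hls

namespace IsLyndonFactorization

variable {l m w : List X} {ms : List (List X)}

theorem le_head_of_mem (h : IsLyndonFactorization (m :: ms) w) (hl : l ∈ ms) : l ≤ m := by
  have hchain : (m :: ms).IsChain (· ≥ ·) := h.2.1.imp fun _ _ => not_lt.1
  exact List.rel_of_pairwise_cons hchain.pairwise hl

theorem head_le (h : IsLyndonFactorization (m :: ms) w) : m ≤ w :=
  -- The `≤` of `List.IsPrefix.le` is by definition `¬ w < m`, not that of the linear order.
  not_lt.1 (List.not_lt.2 (List.IsPrefix.le ⟨ms.flatten, h.2.2⟩))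

theorem le_head_of_isLyndon (h : IsLyndonFactorization (m :: ms) w) (hl : IsLyndon l)
    (hlw : l ≤ w) : l ≤ m := by
  by_contra! hml
  have hlt : ∀ k ∈ m :: ms, k < l :=
    List.forall_mem_cons.2 ⟨hml, fun _ hk => (h.le_head_of_mem hk).trans_lt hml⟩
  have hwl : w < l := h.2.2 ▸ hl.flatten_lt_suffix hlt hl.1 List.suffix_rfl
  exact hlw.not_gt hwl

end IsLyndonFactorization

theorem muchGt_iff_exists_isLyndon {u v : List X} :
    MuchGt v u ↔ ∃ l, IsLyndon l ∧ u < l ∧ l ≤ v := by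
  constructor
  · rintro ⟨l, t, hfac, hul⟩
    exact ⟨l, hfac.1 l List.mem_cons_self, hul, hfac.head_le⟩
  · rintro ⟨l, hl, hul, hlv⟩
    obtain ⟨_ | ⟨m, ms⟩, hfac⟩ := exists_isLyndonFactorization v
    · obtain rfl : [] = v := hfac.2.2
      exact absurd ((List.lex_nil_or_eq_nil l).resolve_right hl.1) hlv.not_gt
    · exact ⟨m, ms, hfac, hul.trans_le (hfac.le_head_of_isLyndon hl hlv)⟩

theorem muchGt_of_le_general {u v w : List X} (hvu : MuchGt v u) (hvw : v ≤ w) : MuchGt w u := by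
  obtain ⟨l, hl, hul, hlv⟩ := muchGt_iff_exists_isLyndon.1 hvu
  exact muchGt_iff_exists_isLyndon.2 ⟨l, hl, hul, hlv.trans hvw⟩

end

/-- If `u` is a Lyndon word, `v, w` are nonempty words, `v ≫ u` and `w ≥ v`
lexicographically, then `w ≫ u`. -/
theorem muchGt_of_le {X : Type*} [Fintype X] [LinearOrder X]
    (u v w : List X) (hu : IsLyndon u) (hv : v ≠ []) (hw : w ≠ [])
    (hvu : MuchGt v u) (hle : w = v ∨ List.Lex (· < ·) v w) :
    MuchGt w u := by
  exact muchGt_of_le_general hvu (hle.elim Eq.ge fun h : v < w => h.le)
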